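/- arXiv:2202.04454 — 4 statements merged into one kernel-verified Lean document; each statement's English description precedes it below -/
import Mathlib

section
/- Let U₁,…,Uₙ and Y be finitely-valued random variables on a common probability space, fix an index 1 ≤ i ≤ n−1, and let Ū₁,…,Ūₙ be the sequence obtained by swapping U_i and U_{i+1} (that is, Ū_i = U_{i+1}, Ū_{i+1} = U_i, and Ū_j = U_j for j ∉ {i, i+1}). Set H_j := H(U_j | U₁,…,U_{j−1}, Y) and H̄_j := H(Ū_j | Ū₁,…,Ū_{j−1}, Y) for 1 ≤ j ≤ n. If H_i ≤ H_{i+1} (the adjacent bits are 'unordered'), then H̄_j = H_j for every j ∉ {i, i+1}, and ∑_{j=1}^{n} H̄_j·(1 − H̄_j) ≤ ∑_{j=1}^{n} H_j·(1 − H_j). In other words, switching the decoding order of two unordered adjacent bits deepens polarization. -/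
/-!
Write `E m` for the joint entropy of `U 0, …, U (m - 1), Y`. By the chain rule
(`seqCondEntropy_eq`), `H_j = E (j + 1) - E j`. Entropy depends on a random variable only through
the partition of `Ω` it induces (`entropy_congr`), and swapping `U i` with `U (i + 1)` changes that
partition only for the prefix of length `i + 1`. Hence only `H_i` and `H_{i+1}` can change, and
their sum is preserved. Submodularity of entropy (`entropy_submodular`), that is, the fact that
conditioning reduces entropy, gives `H̄_i ≥ H_{i+1}` and so `H̄_{i+1} ≤ H_i`. Thus
`H̄_{i+1} ≤ H_i ≤ H_{i+1} ≤ H̄_i`: the pair is spread out with its sum fixed, its sum of squares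
grows, and `∑ H (1 - H)` drops.
-/

open scoped Classical

/-- Probability of an event `E` under a pmf `P` on a finite space. -/
noncomputable def prob {Ω : Type*} [Fintype Ω] (P : Ω → ℝ) (E : Ω → Prop) : ℝ :=
  ∑ ω : Ω, if E ω then P ω else 0

/-- Shannon entropy (natural log) of a finitely-valued random variable `X` under pmf `P`. -/
noncomputable def entropy {Ω α : Type*} [Fintype Ω] [Fintype α] (P : Ω → ℝ) (X : Ω → α) : ℝ :=
  ∑ x : α, Real.negMulLog (prob P fun ω => X ω = x)

/-- Conditional entropy `H(X | Y) = ∑ y P(Y = y) · H(X | Y = y)`. -/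
noncomputable def condEntropy {Ω α β : Type*} [Fintype Ω] [Fintype α] [Fintype β]
    (P : Ω → ℝ) (X : Ω → α) (Y : Ω → β) : ℝ :=
  ∑ y : β, prob P (fun ω => Y ω = y) *
    entropy (fun ω => if Y ω = y then P ω / prob P (fun ω' => Y ω' = y) else 0) X

/-- `H_j = H(U_j | U_1, …, U_{j-1}, Y)` (0-based `j`). -/
noncomputable def seqCondEntropy {Ω α β : Type*} [Fintype Ω] [Fintype α] [Fintype β] {n : ℕ}
    (P : Ω → ℝ) (U : Fin n → Ω → α) (Y : Ω → β) (j : Fin n) : ℝ :=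
  condEntropy P (U j) fun ω => ((fun k : Fin j.val => U (Fin.castLE j.isLt.le k) ω), Y ω)

/-- Entropy as an expectation over `Ω`, in which `X` enters only through its fibres. -/
lemma entropy_eq_sum {Ω α : Type*} [Fintype Ω] [Fintype α] (P : Ω → ℝ) (X : Ω → α) :
    entropy P X = -∑ ω, P ω * Real.log (prob P fun ω' => X ω' = X ω) := by
  have h : ∀ x : α, Real.negMulLog (prob P fun ω => X ω = x) =
      ∑ ω, if X ω = x then -(P ω * Real.log (prob P fun ω' => X ω' = X ω)) else 0 := by
    intro x
    rw [Real.negMulLog, neg_mul, prob, Finset.sum_mul, ← Finset.sum_neg_distrib]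
    refine Finset.sum_congr rfl fun ω _ => ?_
    split_ifs with hx
    · subst hx
      rfl
    · simp
  rw [entropy, Finset.sum_congr rfl fun x _ => h x, Finset.sum_comm, ← Finset.sum_neg_distrib]
  simp

lemma entropy_congr {Ω α β : Type*} [Fintype Ω] [Fintype α] [Fintype β] (P : Ω → ℝ)
    (X : Ω → α) (Y : Ω → β) (h : ∀ ω ω', X ω = X ω' ↔ Y ω = Y ω') :
    entropy P X = entropy P Y := by
  simp only [entropy_eq_sum, h]

lemma prob_nonneg {Ω : Type*} [Fintype Ω] (P : Ω → ℝ) (hP0 : ∀ ω, 0 ≤ P ω) (E : Ω → Prop) :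
    0 ≤ prob P E :=
  Finset.sum_nonneg fun ω _ => by split_ifs <;> simp [hP0]

lemma sum_prob_and {Ω α : Type*} [Fintype Ω] [Fintype α] (P : Ω → ℝ) (X : Ω → α)
    (E : Ω → Prop) : ∑ x, prob P (fun ω => X ω = x ∧ E ω) = prob P E := by
  simp only [prob]
  rw [Finset.sum_comm]
  refine Finset.sum_congr rfl fun ω _ => ?_
  by_cases h : E ω <;> simp [h]

/-- The chain rule `H(X | Y) = H(X, Y) - H(Y)`. -/
lemma condEntropy_eq {Ω α β : Type*} [Fintype Ω] [Fintype α] [Fintype β]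
    (P : Ω → ℝ) (hP0 : ∀ ω, 0 ≤ P ω) (X : Ω → α) (Y : Ω → β) :
    condEntropy P X Y = entropy P (fun ω => (X ω, Y ω)) - entropy P Y := by
  rw [condEntropy, entropy, entropy, Fintype.sum_prod_type_right, ← Finset.sum_sub_distrib]
  refine Finset.sum_congr rfl fun y _ => ?_
  simp only [Prod.mk.injEq]
  have hsum := sum_prob_and P X (fun ω => Y ω = y)
  set q := prob P (fun ω => Y ω = y) with hq
  have hc : ∀ x, prob (fun ω => if Y ω = y then P ω / q else 0) (fun ω => X ω = x) =
      prob P (fun ω => X ω = x ∧ Y ω = y) / q := by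
    intro x
    simp only [prob, Finset.sum_div]
    refine Finset.sum_congr rfl fun ω _ => ?_
    by_cases h1 : X ω = x <;> by_cases h2 : Y ω = y <;> simp [h1, h2]
  simp only [entropy, hc]
  by_cases h0 : q = 0
  · have hz : ∀ x, prob P (fun ω => X ω = x ∧ Y ω = y) = 0 := by
      rw [h0] at hsum
      intro x
      exact (Finset.sum_eq_zero_iff_of_nonneg fun _ _ => prob_nonneg P hP0 _).1 hsum x
        (Finset.mem_univ x)
    simp [hz, h0]
  · have hx : ∀ p : ℝ, q * Real.negMulLog (p / q) = Real.negMulLog p + p * Real.log q := by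
      intro p
      by_cases hp : p = 0
      · simp [hp]
      · rw [Real.negMulLog, Real.negMulLog, Real.log_div hp h0]
        field_simp
        ring
    rw [Finset.mul_sum, Finset.sum_congr rfl fun x _ => hx _, Finset.sum_add_distrib,
      ← Finset.sum_mul, hsum, Real.negMulLog]
    ring

/-- Subadditivity of entropy for an unnormalised joint law `g`; the term `negMulLog` of the total
mass on the left is the correction for `g` not having mass one. -/
lemma sum_negMulLog_le {α β : Type*} [Fintype α] [Fintype β] (g : α → β → ℝ)
    (hg : ∀ x y, 0 ≤ g x y) :
    ∑ x, ∑ y, Real.negMulLog (g x y) + Real.negMulLog (∑ x, ∑ y, g x y) ≤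
      ∑ x, Real.negMulLog (∑ y, g x y) + ∑ y, Real.negMulLog (∑ x, g x y) := by
  set r : α → ℝ := fun x => ∑ y, g x y with hr
  set c : β → ℝ := fun y => ∑ x, g x y with hc
  set s : ℝ := ∑ x, r x with hs
  have hr0 : ∀ x, 0 ≤ r x := fun x => Finset.sum_nonneg fun y _ => hg x y
  have hc0 : ∀ y, 0 ≤ c y := fun y => Finset.sum_nonneg fun x _ => hg x y
  have hs0 : 0 ≤ s := Finset.sum_nonneg fun x _ => hr0 x
  have hsc : ∑ y, c y = s := Finset.sum_comm
  -- `log t ≤ t - 1` at `t = r x * c y / (s * g x y)`, multiplied by `g x y`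
  have key : ∀ x y, g x y * Real.log (r x) + g x y * Real.log (c y) - g x y * Real.log s +
      Real.negMulLog (g x y) ≤ r x * c y / s - g x y := by
    intro x y
    rcases (hg x y).eq_or_lt with h | h
    · rw [← h]
      simpa using div_nonneg (mul_nonneg (hr0 x) (hc0 y)) hs0
    · have h1 : 0 < r x :=
        h.trans_le (Finset.single_le_sum (fun y _ => hg x y) (Finset.mem_univ y))
      have h2 : 0 < c y :=
        h.trans_le (Finset.single_le_sum (f := fun x => g x y) (fun x _ => hg x y)
          (Finset.mem_univ x))
      have h3 : 0 < s :=
        h1.trans_le (Finset.single_le_sum (fun x _ => hr0 x) (Finset.mem_univ x))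
      have hl := Real.log_le_sub_one_of_pos (x := r x * c y / (s * g x y)) (by positivity)
      rw [Real.log_div (by positivity) (by positivity), Real.log_mul h1.ne' h2.ne',
        Real.log_mul h3.ne' h.ne'] at hl
      have hm := mul_le_mul_of_nonneg_left hl h.le
      have he : g x y * (r x * c y / (s * g x y) - 1) = r x * c y / s - g x y := by
        field_simp
      rw [he] at hm
      rw [Real.negMulLog]
      linarith
  have tot := Finset.sum_le_sum fun x (_ : x ∈ Finset.univ) =>
    Finset.sum_le_sum fun y (_ : y ∈ Finset.univ) => key x y
  simp only [Finset.sum_add_distrib, Finset.sum_sub_distrib] at tot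
  have e1 : ∑ x, ∑ y, g x y * Real.log (r x) = -∑ x, Real.negMulLog (r x) := by
    rw [← Finset.sum_neg_distrib]
    refine Finset.sum_congr rfl fun x _ => ?_
    rw [← Finset.sum_mul, Real.negMulLog]
    ring
  have e2 : ∑ x, ∑ y, g x y * Real.log (c y) = -∑ y, Real.negMulLog (c y) := by
    rw [Finset.sum_comm, ← Finset.sum_neg_distrib]
    refine Finset.sum_congr rfl fun y _ => ?_
    rw [← Finset.sum_mul, Real.negMulLog]
    ring
  have e3 : ∑ x, ∑ y, g x y * Real.log s = -Real.negMulLog s := by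
    simp only [← Finset.sum_mul]
    rw [Real.negMulLog]
    ring
  have e4 : ∑ x, ∑ y, r x * c y / s = s := by
    simp only [← Finset.sum_div, ← Finset.mul_sum, ← Finset.sum_mul, hsc]
    exact mul_self_div_self s
  have e5 : ∑ x, ∑ y, g x y = s := rfl
  rw [e1, e2, e3, e4, e5] at tot
  linarith

/-- `H(X, Y, Z) + H(Z) ≤ H(X, Z) + H(Y, Z)`, equivalently `H(X | Y, Z) ≤ H(X | Z)`. -/
lemma entropy_submodular {Ω α β γ : Type*} [Fintype Ω] [Fintype α] [Fintype β] [Fintype γ]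
    (P : Ω → ℝ) (hP0 : ∀ ω, 0 ≤ P ω) (X : Ω → α) (Y : Ω → β) (Z : Ω → γ) :
    entropy P (fun ω => ((X ω, Y ω), Z ω)) + entropy P Z ≤
      entropy P (fun ω => (X ω, Z ω)) + entropy P (fun ω => (Y ω, Z ω)) := by
  simp only [entropy, Fintype.sum_prod_type_right (α₁ := α × β),
    Fintype.sum_prod_type_right (α₁ := α) (α₂ := γ),
    Fintype.sum_prod_type_right (α₁ := β) (α₂ := γ), ← Finset.sum_add_distrib]
  refine Finset.sum_le_sum fun z _ => ?_
  have h := sum_negMulLog_le (fun x y => prob P fun ω => X ω = x ∧ Y ω = y ∧ Z ω = z)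
    (fun x y => prob_nonneg P hP0 _)
  have hX : ∀ x, ∑ y, prob P (fun ω => X ω = x ∧ Y ω = y ∧ Z ω = z) =
      prob P (fun ω => X ω = x ∧ Z ω = z) := by
    intro x
    rw [← sum_prob_and P Y]
    simp only [and_left_comm]
  simp only [hX, sum_prob_and] at h
  simpa only [Fintype.sum_prod_type, Prod.mk.injEq, and_assoc] using h

/-- Joint entropy of `Y` and those `U k` with `k < m`. -/
noncomputable def prefixEntropy {Ω α β : Type*} [Fintype Ω] [Fintype α] [Fintype β] {n : ℕ}
    (P : Ω → ℝ) (U : Fin n → Ω → α) (Y : Ω → β) (m : ℕ) (hm : m ≤ n) : ℝ :=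
  entropy P fun ω => ((fun k : Fin m => U (Fin.castLE hm k) ω), Y ω)

lemma prefix_eq_iff {Ω α β : Type*} {n : ℕ} (U : Fin n → Ω → α) (Y : Ω → β) (m : ℕ)
    (hm : m ≤ n) (ω ω' : Ω) :
    (((fun k : Fin m => U (Fin.castLE hm k) ω), Y ω) =
      ((fun k : Fin m => U (Fin.castLE hm k) ω'), Y ω')) ↔
      (∀ k : Fin n, k.val < m → U k ω = U k ω') ∧ Y ω = Y ω' := by
  rw [Prod.mk.injEq, funext_iff]
  refine and_congr_left' ⟨fun h k hk => h ⟨k, hk⟩, fun h k => h _ k.isLt⟩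

lemma forall_lt_succ_iff {n : ℕ} (j : Fin n) (p : Fin n → Prop) :
    (∀ k : Fin n, k.val < j.val + 1 → p k) ↔ p j ∧ ∀ k : Fin n, k.val < j.val → p k := by
  refine ⟨fun h => ⟨h j (by omega), fun k hk => h k (by omega)⟩, fun h k hk => ?_⟩
  rcases Nat.lt_succ_iff_lt_or_eq.1 hk with hk | hk
  · exact h.2 k hk
  · exact Fin.ext hk ▸ h.1

lemma prefixEntropy_succ {Ω α β : Type*} [Fintype Ω] [Fintype α] [Fintype β] {n : ℕ}
    (P : Ω → ℝ) (U : Fin n → Ω → α) (Y : Ω → β) (j : Fin n) :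
    prefixEntropy P U Y (j.val + 1) j.isLt = entropy P fun ω =>
      (U j ω, ((fun k : Fin j.val => U (Fin.castLE j.isLt.le k) ω), Y ω)) := by
  refine entropy_congr _ _ _ fun ω ω' => ?_
  rw [prefix_eq_iff, Prod.mk.injEq (U j ω), prefix_eq_iff, forall_lt_succ_iff, and_assoc]

lemma seqCondEntropy_eq {Ω α β : Type*} [Fintype Ω] [Fintype α] [Fintype β] {n : ℕ}
    (P : Ω → ℝ) (hP0 : ∀ ω, 0 ≤ P ω) (U : Fin n → Ω → α) (Y : Ω → β) (j : Fin n) :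
    seqCondEntropy P U Y j =
      prefixEntropy P U Y (j.val + 1) j.isLt - prefixEntropy P U Y j.val j.isLt.le := by
  rw [seqCondEntropy, condEntropy_eq P hP0, prefixEntropy_succ]
  rfl

/-- Switching the decoding order of two unordered adjacent bits leaves all other
conditional entropies unchanged and deepens polarization. -/
theorem swap_unordered_adjacent_deepens_polarization
    {Ω α β : Type*} [Fintype Ω] [Fintype α] [Fintype β] {n : ℕ}
    (P : Ω → ℝ) (hP0 : ∀ ω, 0 ≤ P ω) (hP1 : ∑ ω, P ω = 1)
    (U Ubar : Fin n → Ω → α) (Y : Ω → β)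
    (i : Fin n) (hi : i.val + 1 < n)
    (h1 : Ubar i = U ⟨i.val + 1, hi⟩)
    (h2 : Ubar ⟨i.val + 1, hi⟩ = U i)
    (h3 : ∀ j : Fin n, j ≠ i → j ≠ ⟨i.val + 1, hi⟩ → Ubar j = U j)
    (hunord : seqCondEntropy P U Y i ≤ seqCondEntropy P U Y ⟨i.val + 1, hi⟩) :
    (∀ j : Fin n, j ≠ i → j ≠ ⟨i.val + 1, hi⟩ →
        seqCondEntropy P Ubar Y j = seqCondEntropy P U Y j) ∧
      ∑ j, seqCondEntropy P Ubar Y j * (1 - seqCondEntropy P Ubar Y j) ≤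
        ∑ j, seqCondEntropy P U Y j * (1 - seqCondEntropy P U Y j) := by
  set i' : Fin n := ⟨i.val + 1, hi⟩ with hi'
  have hne : i ≠ i' := fun h => by simpa [hi'] using congrArg Fin.val h
  -- a prefix that contains both or neither of `i`, `i + 1` induces the same partition after the swap
  have hE : ∀ m (hm : m ≤ n), m ≠ i.val + 1 →
      prefixEntropy P Ubar Y m hm = prefixEntropy P U Y m hm := by
    intro m hm hmi
    refine entropy_congr _ _ _ fun ω ω' => ?_
    rw [prefix_eq_iff, prefix_eq_iff]
    refine and_congr_left' ⟨fun h k hk => ?_, fun h k hk => ?_⟩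
    · by_cases hk1 : k = i
      · subst hk1
        rw [← h2]
        exact h i' (by simp only [hi']; omega)
      · by_cases hk2 : k = i'
        · rw [hk2] at hk ⊢
          rw [← h1]
          exact h i (by simp only [hi'] at hk; omega)
        · rw [← h3 k hk1 hk2]
          exact h k hk
    · by_cases hk1 : k = i
      · subst hk1
        rw [h1]
        exact h i' (by simp only [hi']; omega)
      · by_cases hk2 : k = i'
        · rw [hk2] at hk ⊢
          rw [h2]
          exact h i (by simp only [hi'] at hk; omega)
        · rw [h3 k hk1 hk2]
          exact h k hk
  have hrest : ∀ j : Fin n, j ≠ i → j ≠ i' →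
      seqCondEntropy P Ubar Y j = seqCondEntropy P U Y j := by
    intro j hj hj'
    rw [seqCondEntropy_eq P hP0, seqCondEntropy_eq P hP0, hE, hE]
    · exact fun h => hj' (Fin.ext h)
    · exact fun h => hj (Fin.ext (by omega))
  refine ⟨hrest, ?_⟩
  have hsub : prefixEntropy P U Y (i.val + 2) hi + prefixEntropy P U Y i.val i.isLt.le ≤
      prefixEntropy P U Y (i.val + 1) i.isLt + prefixEntropy P Ubar Y (i.val + 1) i.isLt := by
    have h := entropy_submodular P hP0 (U i') (U i)
      (fun ω => ((fun k : Fin i.val => U (Fin.castLE i.isLt.le k) ω), Y ω))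
    have e1 : prefixEntropy P U Y (i.val + 2) hi = entropy P fun ω =>
        ((U i' ω, U i ω), ((fun k : Fin i.val => U (Fin.castLE i.isLt.le k) ω), Y ω)) := by
      refine entropy_congr _ _ _ fun ω ω' => ?_
      rw [prefix_eq_iff, Prod.mk.injEq (U i' ω, U i ω), prefix_eq_iff, Prod.mk.injEq]
      have s1 := forall_lt_succ_iff i' (fun k => U k ω = U k ω')
      have s2 := forall_lt_succ_iff i (fun k => U k ω = U k ω')
      simp only [hi'] at s1 ⊢
      rw [s1, s2]
      tauto
    have e2 : prefixEntropy P Ubar Y (i.val + 1) i.isLt = entropy P fun ω =>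
        (U i' ω, ((fun k : Fin i.val => U (Fin.castLE i.isLt.le k) ω), Y ω)) := by
      rw [prefixEntropy_succ, h1]
      congr! 5 with ω k
      rw [h3]
      · exact fun h => absurd (congrArg Fin.val h) k.isLt.ne
      · intro h
        have hv : k.val = i.val + 1 := congrArg Fin.val h
        have := k.isLt
        omega
    rw [e1, e2, prefixEntropy_succ]
    change _ + entropy P _ ≤ _
    linarith
  have a1 := seqCondEntropy_eq P hP0 U Y i
  have a2 : seqCondEntropy P U Y i' = prefixEntropy P U Y (i.val + 2) hi -
      prefixEntropy P U Y (i.val + 1) i.isLt := seqCondEntropy_eq P hP0 U Y i'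
  have b1 := seqCondEntropy_eq P hP0 Ubar Y i
  have b2 : seqCondEntropy P Ubar Y i' = prefixEntropy P Ubar Y (i.val + 2) hi -
      prefixEntropy P Ubar Y (i.val + 1) i.isLt := seqCondEntropy_eq P hP0 Ubar Y i'
  rw [hE i.val i.isLt.le (by omega)] at b1
  rw [hE (i.val + 2) hi (by omega)] at b2
  rw [← sub_nonneg, ← Finset.sum_sub_distrib, Fintype.sum_eq_add i i' hne]
  · generalize seqCondEntropy P U Y i = a at *
    generalize seqCondEntropy P U Y i' = b at *
    generalize seqCondEntropy P Ubar Y i = abar at *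
    generalize seqCondEntropy P Ubar Y i' = bbar at *
    -- `t` is the common gap `H̄_i - H_{i+1} = H_i - H̄_{i+1}`, nonnegative by submodularity
    obtain ⟨t, ht⟩ : ∃ t, t = abar - b := ⟨_, rfl⟩
    have ht0 : 0 ≤ t := by linarith
    have hA : abar = b + t := by linarith
    have hB : bbar = a - t := by linarith
    rw [hA, hB]
    nlinarith [mul_nonneg ht0 (sub_nonneg.2 hunord), sq_nonneg t]
  · rintro j ⟨hj, hj'⟩
    rw [hrest j hj hj', sub_self]
end

section
/- Let W be a binary-input discrete memoryless channel with finite output alphabet 𝒴, let n be even, let A be any (n/2)×(n/2) matrix over 𝔽₂, and let (U, Y) be distributed according to μ_{A⊗G₂}. Define Ũ by Ũ_{2j−1} := U_{2j−1} + U_{2j} and Ũ_{2j} := U_{2j} for 1 ≤ j ≤ n/2. Then the two random vectors (Ũ₁, Ũ₃, …, Ũ_{n−1}, Y₁, Y₃, …, Y_{n−1}) and (Ũ₂, Ũ₄, …, Ũₙ, Y₂, Y₄, …, Yₙ) are independent, and each is distributed according to the length-(n/2) polar-coding model μ_A (as a pair of message vector and output vector). -/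
/-!
Write `e = (2j)_j` and `o = (2j+1)_j` for the (0-based) even and odd positions. Since the
columns of `G₂` are `(1,1)` and `(0,1)`, the codeword `u (A ⊗ G₂)` restricted to `e` is
`(u_e + u_o) A`, and restricted to `o` it is `u_o A` (`vecMul_interKron_even`,
`vecMul_interKron_odd`). Because the channel is memoryless, the pmf of `μ_{A ⊗ G₂}` at `(u, y)`
is therefore the product of the pmf of `μ_A` at `(u_e + u_o, y_e)` and at `(u_o, y_o)`
(`polarPMF_interKron`). The map `(u, y) ↦ ((u_e + u_o, y_e), (u_o, y_o))` is a bijection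
(`splitEquiv`), so the pushforward of `μ_{A ⊗ G₂}` is the product `μ_A × μ_A`. The joint law is
read off at once, and the marginals follow because `μ_A` has total mass one
(`sum_polarPMF`).
-/

open scoped Classical

/-- The polar-coding model `μ_G`: the joint pmf on message/output pairs, where the message
`u` is uniform on `𝔽₂ⁿ`, the codeword is `uG`, and each coordinate is sent through the
binary-input channel `W` (here `W x y` denotes the transition probability `W(y|x)`). -/
noncomputable def polarPMF {𝒴 : Type*} [Fintype 𝒴] {n : ℕ}
    (W : ZMod 2 → 𝒴 → ℝ) (G : Matrix (Fin n) (Fin n) (ZMod 2)) :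
    (Fin n → ZMod 2) × (Fin n → 𝒴) → ℝ :=
  fun p => (1 / 2 : ℝ) ^ n * ∏ j, W (Matrix.vecMul p.1 G j) (p.2 j)

/-- The 2×2 Arıkan kernel `G₂ = [[1,0],[1,1]]` over `𝔽₂`. -/
def G2 : Matrix (Fin 2) (Fin 2) (ZMod 2) := !![1, 0; 1, 1]

/-- The Kronecker product `A ⊗ G₂` under the interleaved index identification
`(j, k) ↦ 2j + k` (0-based): `(A ⊗ G₂)(r, c) = A(r/2, c/2) · G₂(r%2, c%2)`. -/
def interKron {m : ℕ} (A : Matrix (Fin m) (Fin m) (ZMod 2)) :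
    Matrix (Fin (2 * m)) (Fin (2 * m)) (ZMod 2) :=
  fun r c =>
    A ⟨r.val / 2, by have := r.isLt; omega⟩ ⟨c.val / 2, by have := c.isLt; omega⟩ *
      G2 ⟨r.val % 2, by omega⟩ ⟨c.val % 2, by omega⟩

lemma two_mul_val_lt {m : ℕ} (j : Fin m) : 2 * j.val < 2 * m := by
  have := j.isLt
  omega

lemma two_mul_val_add_one_lt {m : ℕ} (j : Fin m) : 2 * j.val + 1 < 2 * m := by
  have := j.isLt
  omega

/-- The even position `2j`. -/
def evenIdx {m : ℕ} (j : Fin m) : Fin (2 * m) := ⟨2 * j.val, two_mul_val_lt j⟩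

/-- The odd position `2j + 1`. -/
def oddIdx {m : ℕ} (j : Fin m) : Fin (2 * m) := ⟨2 * j.val + 1, two_mul_val_add_one_lt j⟩

/-- The even and odd positions partition `Fin (2 * m)`. -/
lemma bijective_evenIdx_oddIdx {m : ℕ} :
    Function.Bijective (Sum.elim (evenIdx (m := m)) oddIdx) := by
  constructor
  · rintro (a | a) (b | b) h <;> simp [evenIdx, oddIdx, Fin.ext_iff] at h ⊢ <;> omega
  · intro r
    have hr := r.isLt
    rcases Nat.mod_two_eq_zero_or_one r.val with h | h
    · exact ⟨Sum.inl ⟨r.val / 2, by omega⟩, Fin.ext (by simp [evenIdx]; omega)⟩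
    · exact ⟨Sum.inr ⟨r.val / 2, by omega⟩, Fin.ext (by simp [oddIdx]; omega)⟩

/-- Interleaved positions as a disjoint union of even and odd ones. -/
noncomputable def interleave (m : ℕ) : Fin m ⊕ Fin m ≃ Fin (2 * m) :=
  Equiv.ofBijective _ bijective_evenIdx_oddIdx

@[simp] lemma interleave_inl {m : ℕ} (j : Fin m) : interleave m (Sum.inl j) = evenIdx j := rfl

@[simp] lemma interleave_inr {m : ℕ} (j : Fin m) : interleave m (Sum.inr j) = oddIdx j := rfl

@[simp] lemma interleave_symm_evenIdx {m : ℕ} (j : Fin m) :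
    (interleave m).symm (evenIdx j) = Sum.inl j := by
  rw [Equiv.symm_apply_eq, interleave_inl]

@[simp] lemma interleave_symm_oddIdx {m : ℕ} (j : Fin m) :
    (interleave m).symm (oddIdx j) = Sum.inr j := by
  rw [Equiv.symm_apply_eq, interleave_inr]

lemma prod_interleave {M : Type*} [CommMonoid M] {m : ℕ} (f : Fin (2 * m) → M) :
    ∏ i, f i = (∏ j, f (evenIdx j)) * ∏ j, f (oddIdx j) := by
  rw [← (interleave m).prod_comp, Fintype.prod_sum_type]
  rfl

lemma sum_interleave {M : Type*} [AddCommMonoid M] {m : ℕ} (f : Fin (2 * m) → M) :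
    ∑ i, f i = (∑ j, f (evenIdx j)) + ∑ j, f (oddIdx j) := by
  rw [← (interleave m).sum_comp, Fintype.sum_sum_type]
  rfl

section interKron

variable {m : ℕ} (A : Matrix (Fin m) (Fin m) (ZMod 2))

lemma interKron_even_even (i j : Fin m) : interKron A (evenIdx i) (evenIdx j) = A i j := by
  simp [interKron, evenIdx, G2]

lemma interKron_even_odd (i j : Fin m) : interKron A (evenIdx i) (oddIdx j) = 0 := by
  have h : (2 * (j : ℕ) + 1) % 2 = 1 := by omega
  simp [interKron, evenIdx, oddIdx, G2, h]

lemma interKron_odd_even (i j : Fin m) : interKron A (oddIdx i) (evenIdx j) = A i j := by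
  have h : (2 * (i : ℕ) + 1) % 2 = 1 := by omega
  have h' : (2 * (i : ℕ) + 1) / 2 = i := by omega
  simp [interKron, evenIdx, oddIdx, G2, h, h']

lemma interKron_odd_odd (i j : Fin m) : interKron A (oddIdx i) (oddIdx j) = A i j := by
  have h (k : Fin m) : (2 * (k : ℕ) + 1) % 2 = 1 := by omega
  have h' (k : Fin m) : (2 * (k : ℕ) + 1) / 2 = k := by omega
  simp [interKron, oddIdx, G2, h, h']

lemma vecMul_interKron_even (u : Fin (2 * m) → ZMod 2) (j : Fin m) :
    Matrix.vecMul u (interKron A) (evenIdx j) =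
      Matrix.vecMul (fun i => u (evenIdx i) + u (oddIdx i)) A j := by
  simp only [Matrix.vecMul, dotProduct]
  rw [sum_interleave, ← Finset.sum_add_distrib]
  simp only [interKron_even_even, interKron_odd_even, add_mul]

lemma vecMul_interKron_odd (u : Fin (2 * m) → ZMod 2) (j : Fin m) :
    Matrix.vecMul u (interKron A) (oddIdx j) = Matrix.vecMul (fun i => u (oddIdx i)) A j := by
  simp only [Matrix.vecMul, dotProduct]
  rw [sum_interleave]
  simp only [interKron_even_odd, interKron_odd_odd, mul_zero, Finset.sum_const_zero, zero_add]

end interKron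

/-- The bijection `(u, y) ↦ ((u_e + u_o, y_e), (u_o, y_o))`, where `e`, `o` are the even and odd
positions. -/
noncomputable def splitEquiv (𝒴 : Type*) (m : ℕ) :
    (Fin (2 * m) → ZMod 2) × (Fin (2 * m) → 𝒴) ≃
      ((Fin m → ZMod 2) × (Fin m → 𝒴)) × ((Fin m → ZMod 2) × (Fin m → 𝒴)) where
  toFun p := ((fun j => p.1 (evenIdx j) + p.1 (oddIdx j), fun j => p.2 (evenIdx j)),
    (fun j => p.1 (oddIdx j), fun j => p.2 (oddIdx j)))
  -- The message at the even positions is recovered as a difference.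
  invFun q := (fun r => Sum.elim (q.1.1 - q.2.1) q.2.1 ((interleave m).symm r),
    fun r => Sum.elim q.1.2 q.2.2 ((interleave m).symm r))
  left_inv p := by
    refine Prod.ext (funext fun r => ?_) (funext fun r => ?_) <;>
      obtain ⟨j | j, rfl⟩ := (interleave m).surjective r <;> simp
  right_inv q := by simp

/-- The factorization `μ_{A ⊗ G₂} = μ_A × μ_A` in the split coordinates. -/
lemma polarPMF_interKron {𝒴 : Type*} [Fintype 𝒴] {m : ℕ} (W : ZMod 2 → 𝒴 → ℝ)
    (A : Matrix (Fin m) (Fin m) (ZMod 2)) (p : (Fin (2 * m) → ZMod 2) × (Fin (2 * m) → 𝒴)) :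
    polarPMF W (interKron A) p =
      polarPMF W A (splitEquiv 𝒴 m p).1 * polarPMF W A (splitEquiv 𝒴 m p).2 := by
  simp only [polarPMF, splitEquiv, Equiv.coe_fn_mk]
  rw [prod_interleave]
  simp only [vecMul_interKron_even, vecMul_interKron_odd]
  ring

lemma sum_polarPMF {𝒴 : Type*} [Fintype 𝒴] {m : ℕ} (W : ZMod 2 → 𝒴 → ℝ)
    (hW1 : ∀ x, ∑ y, W x y = 1) (A : Matrix (Fin m) (Fin m) (ZMod 2)) :
    ∑ p, polarPMF W A p = 1 := by
  have h (u : Fin m → ZMod 2) :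
      ∑ y : Fin m → 𝒴, ∏ j, W (Matrix.vecMul u A j) (y j) = 1 := by
    rw [← Fintype.prod_sum fun j y => W (Matrix.vecMul u A j) y]
    simp [hW1]
  simp only [polarPMF]
  rw [← Finset.mul_sum, Fintype.sum_prod_type]
  simp [h]

/-- Probabilities under `μ_{A ⊗ G₂}` are computed under `μ_A × μ_A` in the split coordinates. -/
lemma prob_interKron {𝒴 : Type*} [Fintype 𝒴] {m : ℕ} (W : ZMod 2 → 𝒴 → ℝ)
    (A : Matrix (Fin m) (Fin m) (ZMod 2))
    (E : (Fin (2 * m) → ZMod 2) × (Fin (2 * m) → 𝒴) → Prop)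
    (F : ((Fin m → ZMod 2) × (Fin m → 𝒴)) × ((Fin m → ZMod 2) × (Fin m → 𝒴)) → Prop)
    [DecidablePred F] (hEF : ∀ p, E p ↔ F (splitEquiv 𝒴 m p)) :
    prob (polarPMF W (interKron A)) E =
      ∑ a, ∑ b, if F (a, b) then polarPMF W A a * polarPMF W A b else 0 := by
  rw [prob, ← Fintype.sum_prod_type' (f := fun a b =>
    if F (a, b) then polarPMF W A a * polarPMF W A b else 0), ← (splitEquiv 𝒴 m).sum_comp]
  refine Finset.sum_congr rfl fun p _ => ?_
  simp only [polarPMF_interKron, hEF]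

/-- One polar-transform layer splits `μ_{A ⊗ G₂}` into two independent copies of `μ_A`:
with `Ũ_{2j} := U_{2j} + U_{2j+1}` and `Ũ_{2j+1} := U_{2j+1}` (0-based), the odd pair
`((Ũ_{2j})_j, (Y_{2j})_j)` and the even pair `((Ũ_{2j+1})_j, (Y_{2j+1})_j)` are
independent, and each is distributed according to the length-`m` model `μ_A`. -/
theorem polar_layer_splits_into_independent_halves {𝒴 : Type*} [Fintype 𝒴] {m : ℕ}
    (W : ZMod 2 → 𝒴 → ℝ) (hW0 : ∀ x y, 0 ≤ W x y) (hW1 : ∀ x, ∑ y, W x y = 1)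
    (A : Matrix (Fin m) (Fin m) (ZMod 2)) :
    (∀ (v₁ v₂ : Fin m → ZMod 2) (z₁ z₂ : Fin m → 𝒴),
        prob (polarPMF W (interKron A))
          (fun p =>
            (∀ j : Fin m,
              p.1 ⟨2 * j.val, by have := j.isLt; omega⟩ +
                  p.1 ⟨2 * j.val + 1, by have := j.isLt; omega⟩ = v₁ j ∧
                p.2 ⟨2 * j.val, by have := j.isLt; omega⟩ = z₁ j) ∧
            (∀ j : Fin m,
              p.1 ⟨2 * j.val + 1, by have := j.isLt; omega⟩ = v₂ j ∧
                p.2 ⟨2 * j.val + 1, by have := j.isLt; omega⟩ = z₂ j)) =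
          polarPMF W A (v₁, z₁) * polarPMF W A (v₂, z₂)) ∧
      (∀ (v : Fin m → ZMod 2) (z : Fin m → 𝒴),
        prob (polarPMF W (interKron A))
          (fun p => ∀ j : Fin m,
            p.1 ⟨2 * j.val, by have := j.isLt; omega⟩ +
                p.1 ⟨2 * j.val + 1, by have := j.isLt; omega⟩ = v j ∧
              p.2 ⟨2 * j.val, by have := j.isLt; omega⟩ = z j) =
          polarPMF W A (v, z)) ∧
      (∀ (v : Fin m → ZMod 2) (z : Fin m → 𝒴),
        prob (polarPMF W (interKron A))
          (fun p => ∀ j : Fin m,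
            p.1 ⟨2 * j.val + 1, by have := j.isLt; omega⟩ = v j ∧
              p.2 ⟨2 * j.val + 1, by have := j.isLt; omega⟩ = z j) =
          polarPMF W A (v, z)) := by
  refine ⟨fun v₁ v₂ z₁ z₂ => ?_, fun v z => ?_, fun v z => ?_⟩
  · rw [prob_interKron W A _ (fun q => q.1 = (v₁, z₁) ∧ q.2 = (v₂, z₂)) fun p => by
      simp [splitEquiv, evenIdx, oddIdx, Prod.ext_iff, funext_iff, forall_and]]
    rw [Finset.sum_comm]
    simp [ite_and]
  · rw [prob_interKron W A _ (fun q => q.1 = (v, z)) fun p => by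
      simp [splitEquiv, evenIdx, oddIdx, Prod.ext_iff, funext_iff, forall_and]]
    rw [Finset.sum_comm]
    simp [← Finset.mul_sum, sum_polarPMF W hW1 A]
  · rw [prob_interKron W A _ (fun q => q.2 = (v, z)) fun p => by
      simp [splitEquiv, evenIdx, oddIdx, Prod.ext_iff, funext_iff, forall_and]]
    simp [← Finset.sum_mul, sum_polarPMF W hW1 A]
end

section
/- (Consistency of the two recursive formulas for V_{2i+1}^{(n)}.) Let W be a binary-input disc memoryless channel with finite output alphabet 𝒴, let n = 2^m ≥ 8, and let 1 ≤ i ≤ n/2 − 2. Then for all y ∈ 𝒴ⁿ, all u₁,…,u_{2i} ∈ 𝔽₂ and all a, b ∈ 𝔽₂: (1/4)·V_i^{(n/2)}(y_odd, (ũ₁, ũ₃, …, ũ_{2i−3}) | u_{2i−1}+u_{2i}, a+b) · V_i^{(n/2)}(y_even, (ũ₂, ũ₄, …, ũ_{2i−2}) | u_{2i}, b) = (1/4)·∑_{c,d ∈ 𝔽₂} V_{i+1}^{(n/2)}(y_odd, (ũ₁, ũ₃, …, ũ_{2i−1}) | a+b, c+d) · V_{i+1}^{(n/2)}(y_even, (ũ₂,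 ũ₄, …, ũ_{2i}) | b, d); that is, the '△' transform of V_i^{(n/2)} agrees with the '▽' transform of V_{i+1}^{(n/2)}, both computing V_{2i+1}^{(n)}. -/
/-!
Write `N_i` for the joint probability in the numerator of `V_i` (before conditioning).
Two facts about an arbitrary matrix `M` carry the proof.

* `prob_adjacent_bits`: the conditioning event always has probability `1/4`, since the outputs
  sum out to `1` and the message is uniform. Hence `V_i = 4 N_i`.
* `prob_prefix_eq_sum`: by the law of total probability over the bit following the pair,
  `N_i(y, pre | a, b) = ∑ c, N_{i+1}(y, (pre, a) | b, c)`.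

Together they give `V_i(y, pre | a, b) = ∑ c, V_{i+1}(y, (pre, a) | b, c)`. Applying this to both
factors of the `△` transform and substituting `c ↦ c + d` in the first sum gives the `▽` transform.
-/

open scoped Classical

/-- The adjacent-bits-channel `V_i^M` of the model `μ_M` (0-based index `i`):
`V_i^M(y, (u_0, …, u_{i-1}) | a, b) = P(Y = y, U_0 = u_0, …, U_{i-1} = u_{i-1} | U_i = a, U_{i+1} = b)`.
Only the values `upre j` for `j < i` are relevant. -/
noncomputable def adjChannel {𝒴 : Type*} [Fintype 𝒴] {m : ℕ}
    (W : ZMod 2 → 𝒴 → ℝ) (M : Matrix (Fin m) (Fin m) (ZMod 2))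
    (i : ℕ) (y : Fin m → 𝒴) (upre : ℕ → ZMod 2) (a b : ZMod 2) : ℝ :=
  prob (polarPMF W M)
      (fun p => p.2 = y ∧ ∀ j : Fin m,
        (j.val < i → p.1 j = upre j.val) ∧ (j.val = i → p.1 j = a) ∧
          (j.val = i + 1 → p.1 j = b)) /
    prob (polarPMF W M)
      (fun p => ∀ j : Fin m, (j.val = i → p.1 j = a) ∧ (j.val = i + 1 → p.1 j = b))

/-- The polar matrix `G_{2^m}^polar = G₂^{⊗ m}` (via `G_{2n} = G_n ⊗ G₂`,
interleaved identification). -/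
def Gpolar : (m : ℕ) → Matrix (Fin (2 ^ m)) (Fin (2 ^ m)) (ZMod 2)
  | 0 => 1
  | m + 1 => Matrix.reindex (finCongr (by ring)) (finCongr (by ring)) (interKron (Gpolar m))

/-- Summing the outputs out of `μ_M` leaves the uniform distribution on messages. -/
lemma sum_polarPMF_output {𝒴 : Type*} [Fintype 𝒴] {m : ℕ}
    (W : ZMod 2 → 𝒴 → ℝ) (hW1 : ∀ x, ∑ y, W x y = 1)
    (M : Matrix (Fin m) (Fin m) (ZMod 2)) (v : Fin m → ZMod 2) :
    ∑ y : Fin m → 𝒴, polarPMF W M (v, y) = (1 / 2 : ℝ) ^ m := by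
  simp only [polarPMF]
  rw [← Finset.mul_sum, ← Fintype.prod_sum (fun j z => W (Matrix.vecMul v M j) z)]
  simp [hW1]

lemma card_adjacent_bits {m : ℕ} (i : ℕ) (hi : i + 1 < m) (a b : ZMod 2) :
    (Finset.univ.filter (fun v : Fin m → ZMod 2 =>
      ∀ j : Fin m, (j.val = i → v j = a) ∧ (j.val = i + 1 → v j = b))).card = 2 ^ (m - 2) := by
  have hset : (Finset.univ.filter (fun v : Fin m → ZMod 2 =>
      ∀ j : Fin m, (j.val = i → v j = a) ∧ (j.val = i + 1 → v j = b))) =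
      Fintype.piFinset (fun j : Fin m =>
        if j.val = i then ({a} : Finset (ZMod 2)) else if j.val = i + 1 then {b}
          else Finset.univ) := by
    ext v
    simp only [Finset.mem_filter, Finset.mem_univ, true_and, Fintype.mem_piFinset]
    refine forall_congr' fun j => ?_
    split_ifs with h1 h2
    · simp [h1]
    · simp [h2]
    · simp [h1, h2]
  have hcard : ∀ j : Fin m, (if j.val = i then ({a} : Finset (ZMod 2))
      else if j.val = i + 1 then {b} else Finset.univ).card =
      if j ∈ ({⟨i, by omega⟩, ⟨i + 1, hi⟩} : Finset (Fin m)) then 1 else 2 := by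
    intro j
    simp only [Finset.mem_insert, Finset.mem_singleton, Fin.ext_iff]
    split_ifs <;> simp_all
  rw [hset, Fintype.card_piFinset, Finset.prod_congr rfl (fun j _ => hcard j), Finset.prod_ite]
  simp only [Finset.prod_const, one_pow, one_mul]
  congr 1
  rw [Finset.filter_notMem_eq_sdiff, Finset.card_sdiff_of_subset (Finset.subset_univ _),
    Finset.card_pair (by simp [Fin.ext_iff])]
  simp

/-- The conditioning event of every adjacent-bits-channel has probability `1/4`. -/
lemma prob_adjacent_bits {𝒴 : Type*} [Fintype 𝒴] {m : ℕ}
    (W : ZMod 2 → 𝒴 → ℝ) (hW1 : ∀ x, ∑ y, W x y = 1)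
    (M : Matrix (Fin m) (Fin m) (ZMod 2)) (i : ℕ) (hi : i + 1 < m) (a b : ZMod 2) :
    prob (polarPMF W M)
      (fun p => ∀ j : Fin m, (j.val = i → p.1 j = a) ∧ (j.val = i + 1 → p.1 j = b)) = 1 / 4 := by
  unfold prob
  rw [Fintype.sum_prod_type]
  have hinner : ∀ v : Fin m → ZMod 2, (∑ z : Fin m → 𝒴,
      if ∀ j : Fin m, (j.val = i → v j = a) ∧ (j.val = i + 1 → v j = b)
        then polarPMF W M (v, z) else 0) =
      if ∀ j : Fin m, (j.val = i → v j = a) ∧ (j.val = i + 1 → v j = b)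
        then (1 / 2 : ℝ) ^ m else 0 := by
    intro v
    split_ifs
    · exact sum_polarPMF_output W hW1 M v
    · simp
  refine (Finset.sum_congr rfl fun v _ => ?_ : _ = ∑ v : Fin m → ZMod 2,
      if ∀ j : Fin m, (j.val = i → v j = a) ∧ (j.val = i + 1 → v j = b)
        then (1 / 2 : ℝ) ^ m else 0).trans ?_
  · convert hinner v
  rw [← Finset.sum_filter, Finset.sum_const, card_adjacent_bits i hi a b, nsmul_eq_mul]
  obtain ⟨r, rfl⟩ : ∃ r, m = r + 2 := ⟨m - 2, by omega⟩
  push_cast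
  rw [pow_add, ← mul_assoc, ← mul_pow]
  norm_num

/-- Law of total probability over the bit that follows the observed pair: the prefix grows by
the bit `upre i`, and the new last bit `c` is summed over. -/
lemma prob_prefix_eq_sum {𝒴 : Type*} [Fintype 𝒴] {m : ℕ}
    (P : (Fin m → ZMod 2) × (Fin m → 𝒴) → ℝ) (i : ℕ) (hi : i + 2 < m)
    (y : Fin m → 𝒴) (upre : ℕ → ZMod 2) (b : ZMod 2) :
    prob P (fun p => p.2 = y ∧ ∀ j : Fin m,
        (j.val < i → p.1 j = upre j.val) ∧ (j.val = i → p.1 j = upre i) ∧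
          (j.val = i + 1 → p.1 j = b)) =
      ∑ c : ZMod 2, prob P (fun p => p.2 = y ∧ ∀ j : Fin m,
        (j.val < i + 1 → p.1 j = upre j.val) ∧ (j.val = i + 1 → p.1 j = b) ∧
          (j.val = i + 1 + 1 → p.1 j = c)) := by
  unfold prob
  rw [Finset.sum_comm]
  refine Finset.sum_congr rfl fun p _ => ?_
  have key : ∀ c : ZMod 2, (p.2 = y ∧ ∀ j : Fin m,
        (j.val < i + 1 → p.1 j = upre j.val) ∧ (j.val = i + 1 → p.1 j = b) ∧
          (j.val = i + 1 + 1 → p.1 j = c)) ↔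
      (p.1 ⟨i + 2, hi⟩ = c ∧ (p.2 = y ∧ ∀ j : Fin m,
        (j.val < i → p.1 j = upre j.val) ∧ (j.val = i → p.1 j = upre i) ∧
          (j.val = i + 1 → p.1 j = b))) := by
    intro c
    constructor
    · rintro ⟨hy, h⟩
      refine ⟨(h ⟨i + 2, hi⟩).2.2 rfl, hy, fun j => ⟨fun hj => (h j).1 (by omega), fun hj => ?_,
        (h j).2.1⟩⟩
      rw [(h j).1 (by omega), hj]
    · rintro ⟨hc, hy, h⟩
      refine ⟨hy, fun j => ⟨fun hj => ?_, (h j).2.2, fun hj => ?_⟩⟩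
      · rcases Nat.lt_succ_iff_lt_or_eq.mp hj with hlt | heq
        · exact (h j).1 hlt
        · rw [(h j).2.1 heq, heq]
      · rw [← hc]
        exact congrArg p.1 (Fin.ext hj)
  simp only [key]
  split_ifs with h
  · simp only [and_iff_left h, Finset.sum_ite_eq, Finset.mem_univ, if_true]
  · simp [h]

/-- The recursion `V_i = ∑ c, V_{i+1}`, with the first conditioned bit read off from `upre` so that
the same `upre` serves as the longer prefix on the right. -/
lemma adjChannel_eq_sum_succ {𝒴 : Type*} [Fintype 𝒴] {m : ℕ}
    (W : ZMod 2 → 𝒴 → ℝ) (hW1 : ∀ x, ∑ y, W x y = 1)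
    (M : Matrix (Fin m) (Fin m) (ZMod 2)) (i : ℕ) (hi : i + 2 < m)
    (y : Fin m → 𝒴) (upre : ℕ → ZMod 2) (b : ZMod 2) :
    adjChannel W M i y upre (upre i) b =
      ∑ c : ZMod 2, adjChannel W M (i + 1) y upre b c := by
  unfold adjChannel
  simp only [prob_adjacent_bits W hW1 M i (by omega), prob_adjacent_bits W hW1 M (i + 1) hi]
  rw [prob_prefix_eq_sum _ i hi, Finset.sum_div]

/-- Consistency of the two recursive formulas for `V_{2i+1}^{(n)}`: the '△' transform of
`V_i^{(n/2)}` agrees with the '▽' transform of `V_{i+1}^{(n/2)}` (paper's 1-based index `i`,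
`n = 2^(k+3) ≥ 8`, `1 ≤ i ≤ n/2 − 2`; the channels below use 0-based indices). -/
theorem adjChannel_polar_triangle_eq_nabla {𝒴 : Type*} [Fintype 𝒴]
    (W : ZMod 2 → 𝒴 → ℝ) (hW0 : ∀ x y, 0 ≤ W x y) (hW1 : ∀ x, ∑ y, W x y = 1)
    (k i : ℕ) (hi1 : 1 ≤ i) (hi2 : i ≤ 2 ^ (k + 2) - 2)
    (y : Fin (2 ^ (k + 3)) → 𝒴) (u : ℕ → ZMod 2) (a b : ZMod 2) :
    (1 / 4 : ℝ) *
        adjChannel W (Gpolar (k + 2)) (i - 1)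
            (fun j => y ⟨2 * j.val, by
              have := j.isLt
              have h : (2 : ℕ) ^ (k + 3) = 2 * 2 ^ (k + 2) := (by ring); omega⟩)
            (fun t => u (2 * t) + u (2 * t + 1))
            (u (2 * i - 2) + u (2 * i - 1)) (a + b) *
          adjChannel W (Gpolar (k + 2)) (i - 1)
            (fun j => y ⟨2 * j.val + 1, by
              have := j.isLt
              have h : (2 : ℕ) ^ (k + 3) = 2 * 2 ^ (k + 2) := (by ring); omega⟩)
            (fun t => u (2 * t + 1)) (u (2 * i - 1)) b =
      (1 / 4 : ℝ) * ∑ c : ZMod 2, ∑ d : ZMod 2,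
        adjChannel W (Gpolar (k + 2)) i
            (fun j => y ⟨2 * j.val, by
              have := j.isLt
              have h : (2 : ℕ) ^ (k + 3) = 2 * 2 ^ (k + 2) := (by ring); omega⟩)
            (fun t => u (2 * t) + u (2 * t + 1)) (a + b) (c + d) *
          adjChannel W (Gpolar (k + 2)) i
            (fun j => y ⟨2 * j.val + 1, by
              have := j.isLt
              have h : (2 : ℕ) ^ (k + 3) = 2 * 2 ^ (k + 2) := (by ring); omega⟩)
            (fun t => u (2 * t + 1)) b d := by
  obtain ⟨i, rfl⟩ : ∃ r, i = r + 1 := ⟨i - 1, by omega⟩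
  have hlt : i + 2 < 2 ^ (k + 2) := by omega
  have e1 : 2 * (i + 1) - 2 = 2 * i := by omega
  have e2 : 2 * (i + 1) - 1 = 2 * i + 1 := by omega
  simp only [Nat.add_sub_cancel, e1, e2]
  rw [adjChannel_eq_sum_succ W hW1 _ i hlt _ (fun t => u (2 * t) + u (2 * t + 1)),
    adjChannel_eq_sum_succ W hW1 _ i hlt _ (fun t => u (2 * t + 1)),
    mul_assoc, Finset.sum_mul_sum, Finset.sum_comm]
  congr 1
  conv_rhs => rw [Finset.sum_comm]
  -- For fixed `d`, translation by `d` permutes the values `c` of the bit summed in the first factor.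
  exact Finset.sum_congr rfl fun d _ => (Equiv.sum_comp (Equiv.addRight d) fun c =>
    adjChannel W (Gpolar (k + 2)) (i + 1) _ _ (a + b) c *
      adjChannel W (Gpolar (k + 2)) (i + 1) _ _ b d).symm
end

section
/- (Lemma 2, Case i: swapped adjacent bits.) Let W be a binary-input discrete memoryless channel with finite output alphabet 𝒴, let n ≥ 4 be even, let A be an (n/2)×(n/2) matrix over 𝔽₂, let 𝓘 ⊆ {1,…,n−1} satisfy the separation condition, and set Gₙ := P_𝓘·(A ⊗ G₂). Suppose 1 ≤ i ≤ n/2−1 and 2i ∈ 𝓘. Then for all y ∈ 𝒴ⁿ and all u₁,…,u_{2i+2} ∈ 𝔽₂: (a) V_{2i−1}^{Gₙ}(y, (u₁,…,u_{2i−2}) | u_{2i−1}, u_{2i}) = (1/4)·∑_{c,d∈𝔽₂} V_i^A(y_odd, (ũ₁,ũ₃,…,ũ_{2i−3}) | u_{2i−1}+c, u_{2i}+d)·V_i^A(y_even, (ũ₂,ũ₄,…,ũ_{2i−2}) | c, d); (b) V_{2i}^{Gₙ}(y, (u₁,…,u_{2i−1}) | u_{2i}, u_{2i+1}) = (1/4)·∑_{d∈𝔽₂}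 V_i^A(y_odd, (ũ₁,ũ₃,…,ũ_{2i−3}) | u_{2i−1}+u_{2i+1}, u_{2i}+d)·V_i^A(y_even, (ũ₂,ũ₄,…,ũ_{2i−2}) | u_{2i+1}, d); (c) V_{2i+1}^{Gₙ}(y, (u₁,…,u_{2i}) | u_{2i+1}, u_{2i+2}) = (1/4)·V_i^A(y_odd, (ũ₁,ũ₃,…,ũ_{2i−3}) | u_{2i−1}+u_{2i+1}, u_{2i}+u_{2i+2})·V_i^A(y_even, (ũ₂,ũ₄,…,ũ_{2i−2}) | u_{2i+1}, u_{2i+2}). These are the identities V_{2i−1} = (V_i)^▼, V_{2i} = (V_i)^◆, V_{2i+1} = (V_i)^▲ of the Swapped-Double-Bits transform. -/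
/-!
For a prefix length `k`, let `S_M(k, f)` be the sum of the likelihoods `∏ j, W((vM)_j, y_j)` over
all messages `v` whose first `k` bits agree with `f` (`prefixSum`). Since the messages are uniform
and `W` is stochastic, the conditioning event of an adjacent-bits-channel has probability `1/4`, so
every adjacent-bits-channel of length `m` is `4 · 2⁻ᵐ · S_M(i + 2, f)` (`adjChannel_eq_prefixSum`).

The map `v ↦ ((ṽ_{2t})_t, (ṽ_{2t+1})_t)` (0-based) is a bijection `𝔽₂²ᵐ ≃ 𝔽₂ᵐ × 𝔽₂ᵐ` under which the
likelihood of `P_𝓘 (A ⊗ G₂)` splits into a product of two likelihoods of `A`, one for the even and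
one for the odd output positions. If `2K ∉ 𝓘` the permutation preserves the first `2K` positions, so
fixing a prefix of length `2K` amounts to fixing prefixes of length `K` of both halves, whence
`S_G(2K, u) = S_A(K, ·) · S_A(K, ·)` (`prefixSum_split`). With `K = i + 1` (and `2i + 2 ∉ 𝓘` by
separation) this is identity (c). Identities (b) and (a) follow by summing it over the last one,
respectively two, bits of the prefix (`prefixSum_succ`).
-/

open scoped Classical

/-- The (0-based) index map of the permutation `P_𝓘`: for each (1-based, paper) index
`i ∈ 𝓘`, the coordinates `i − 1` and `i` (0-based) are exchanged (so that
`(u P_𝓘)_j = u_{swapPerm 𝓘 j}` under the separation condition). -/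
def swapPerm (I : Finset ℕ) (j : ℕ) : ℕ :=
  if j + 1 ∈ I then j + 1 else if j ∈ I then j - 1 else j

/-- The `n×n` permutation matrix `P_𝓘` over `𝔽₂`. -/
def permMatrix (I : Finset ℕ) (n : ℕ) : Matrix (Fin n) (Fin n) (ZMod 2) :=
  fun r c => if swapPerm I r.val = c.val then 1 else 0

/-! ### Adjacent-bits-channels as prefix sums -/

/-- The likelihood `∏ j, W(y_j | (vM)_j)` of the message `v` given the output `y`. -/
noncomputable def likelihood {𝒴 : Type*} {n : ℕ} (W : ZMod 2 → 𝒴 → ℝ)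
    (M : Matrix (Fin n) (Fin n) (ZMod 2)) (y : Fin n → 𝒴) (v : Fin n → ZMod 2) : ℝ :=
  ∏ j, W (Matrix.vecMul v M j) (y j)

/-- The sum of the likelihoods of all messages whose first `k` bits are those of `f`. -/
noncomputable def prefixSum {𝒴 : Type*} {n : ℕ} (W : ZMod 2 → 𝒴 → ℝ)
    (M : Matrix (Fin n) (Fin n) (ZMod 2)) (y : Fin n → 𝒴) (k : ℕ) (f : ℕ → ZMod 2) : ℝ :=
  ∑ v : Fin n → ZMod 2, if ∀ j : Fin n, j.val < k → v j = f j.val then likelihood W M y v else 0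

lemma sum_likelihood {𝒴 : Type*} [Fintype 𝒴] {n : ℕ} (W : ZMod 2 → 𝒴 → ℝ)
    (hW1 : ∀ x, ∑ y, W x y = 1) (M : Matrix (Fin n) (Fin n) (ZMod 2)) (v : Fin n → ZMod 2) :
    ∑ y : Fin n → 𝒴, likelihood W M y v = 1 := by
  unfold likelihood
  rw [← Fintype.prod_sum (fun j y => W (Matrix.vecMul v M j) y)]
  simp [hW1]

/-- The bits `U_i`, `U_{i+1}` of a uniform message take given values with probability `1/4`. -/
lemma uniform_pair {n : ℕ} (i : ℕ) (hi : i + 1 < n) (a b : ZMod 2) :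
    ∑ v : Fin n → ZMod 2, (if ∀ j : Fin n, (j.val = i → v j = a) ∧ (j.val = i + 1 → v j = b)
      then (1 / 2 : ℝ) ^ n else 0) = 1 / 4 := by
  have h1 : ∀ v : Fin n → ZMod 2,
      (if ∀ j : Fin n, (j.val = i → v j = a) ∧ (j.val = i + 1 → v j = b)
        then (1 / 2 : ℝ) ^ n else 0) =
      ∏ j : Fin n, (if (j.val = i → v j = a) ∧ (j.val = i + 1 → v j = b)
        then (1 / 2 : ℝ) else 0) := by
    intro v
    split_ifs with h
    · rw [Finset.prod_congr rfl (fun j _ => if_pos (h j))]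
      simp
    · push Not at h
      obtain ⟨j, hj⟩ := h
      refine (Finset.prod_eq_zero (Finset.mem_univ j) (if_neg ?_)).symm
      rintro ⟨h1, h2⟩
      obtain ⟨h3, h4⟩ := hj h1
      exact h4 (h2 h3)
  simp_rw [h1]
  rw [← Fintype.prod_sum (fun (j : Fin n) (x : ZMod 2) =>
    if (j.val = i → x = a) ∧ (j.val = i + 1 → x = b) then (1 / 2 : ℝ) else 0)]
  have h2 : ∀ j : Fin n, (∑ x : ZMod 2,
      if (j.val = i → x = a) ∧ (j.val = i + 1 → x = b) then (1 / 2 : ℝ) else 0) =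
      (if j = ⟨i, by omega⟩ then (1 / 2 : ℝ) else 1) *
        (if j = ⟨i + 1, hi⟩ then (1 / 2 : ℝ) else 1) := by
    intro j
    simp only [Fin.ext_iff]
    by_cases h3 : j.val = i
    · simp [h3]
    · by_cases h4 : j.val = i + 1
      · simp [h4]
      · simp [h3, h4]
  simp_rw [h2]
  rw [Finset.prod_mul_distrib, Finset.prod_ite_eq', Finset.prod_ite_eq']
  norm_num

/-- The prefix and the two conditioning bits may be read off a single sequence `f`. -/
lemma adjChannel_eq_prefixSum {𝒴 : Type*} [Fintype 𝒴] {n : ℕ} (W : ZMod 2 → 𝒴 → ℝ)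
    (hW1 : ∀ x, ∑ y, W x y = 1) (M : Matrix (Fin n) (Fin n) (ZMod 2)) (i : ℕ) (hi : i + 1 < n)
    (y : Fin n → 𝒴) (g f : ℕ → ZMod 2) (a b : ZMod 2)
    (hf : ∀ t < i, f t = g t) (ha : f i = a) (hb : f (i + 1) = b) :
    adjChannel W M i y g a b = 4 * (1 / 2 : ℝ) ^ n * prefixSum W M y (i + 2) f := by
  have hden : prob (polarPMF W M)
      (fun p => ∀ j : Fin n, (j.val = i → p.1 j = a) ∧ (j.val = i + 1 → p.1 j = b)) = 1 / 4 := by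
    unfold prob
    rw [← uniform_pair i hi a b, Fintype.sum_prod_type]
    refine Finset.sum_congr rfl fun v _ => ?_
    split_ifs with h
    · have := sum_likelihood W hW1 M v
      unfold likelihood at this
      simp only [polarPMF]
      rw [← Finset.mul_sum, this, mul_one]
    · simp
  have hnum : prob (polarPMF W M)
      (fun p => p.2 = y ∧ ∀ j : Fin n,
        (j.val < i → p.1 j = g j.val) ∧ (j.val = i → p.1 j = a) ∧
          (j.val = i + 1 → p.1 j = b)) = (1 / 2 : ℝ) ^ n * prefixSum W M y (i + 2) f := by
    unfold prob prefixSum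
    rw [Fintype.sum_prod_type, Finset.mul_sum]
    refine Finset.sum_congr rfl fun v _ => ?_
    rw [Finset.sum_eq_single y (by intro z _ hz; simp [hz]) (by simp)]
    have hiff : (∀ j : Fin n, (j.val < i → v j = g j.val) ∧ (j.val = i → v j = a) ∧
        (j.val = i + 1 → v j = b)) ↔ ∀ j : Fin n, j.val < i + 2 → v j = f j.val := by
      refine forall_congr' fun j => ?_
      constructor
      · rintro ⟨h1, h2, h3⟩ hj
        rcases (by omega : j.val < i ∨ j.val = i ∨ j.val = i + 1) with h | h | h
        · rw [h1 h, hf _ h]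
        · rw [h2 h, h, ha]
        · rw [h3 h, h, hb]
      · intro h
        refine ⟨fun h1 => ?_, fun h1 => ?_, fun h1 => ?_⟩
        · rw [h (by omega), hf _ h1]
        · rw [h (by omega), h1, ha]
        · rw [h (by omega), h1, hb]
    simp only [true_and, hiff, polarPMF, likelihood, mul_ite, mul_zero]
  unfold adjChannel
  rw [hden, hnum]
  ring

/-- Summing over the last bit of a prefix shortens the prefix by one. -/
lemma prefixSum_succ {𝒴 : Type*} {n : ℕ} (W : ZMod 2 → 𝒴 → ℝ)
    (M : Matrix (Fin n) (Fin n) (ZMod 2)) (y : Fin n → 𝒴) (k : ℕ) (hk : k < n) (f : ℕ → ZMod 2) :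
    prefixSum W M y k f = ∑ d : ZMod 2, prefixSum W M y (k + 1) (Function.update f k d) := by
  unfold prefixSum
  rw [Finset.sum_comm]
  refine Finset.sum_congr rfl fun v _ => ?_
  have hiff : ∀ d : ZMod 2,
      (∀ j : Fin n, j.val < k + 1 → v j = Function.update f k d j.val) ↔
        d = v ⟨k, hk⟩ ∧ ∀ j : Fin n, j.val < k → v j = f j.val := by
    intro d
    constructor
    · intro h
      refine ⟨?_, fun j hj => ?_⟩
      · have := h ⟨k, hk⟩ (by simp)
        simpa using this.symm
      · rw [h j (by omega), Function.update_of_ne (by omega)]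
    · rintro ⟨h1, h2⟩ j hj
      by_cases hjk : j.val = k
      · have : j = ⟨k, hk⟩ := Fin.ext hjk
        subst this
        simp [h1]
      · rw [Function.update_of_ne hjk, h2 j (by omega)]
  simp_rw [hiff, ite_and]
  simp

/-! ### The permutation -/

lemma swapPerm_swapPerm {I : Finset ℕ} (hpos : ∀ x ∈ I, 1 ≤ x) (hIeven : ∀ x ∈ I, 2 ∣ x) (j : ℕ) :
    swapPerm I (swapPerm I j) = j := by
  by_cases h1 : j + 1 ∈ I
  · have h2 : j + 1 + 1 ∉ I := fun h => by
      have := hIeven _ h; have := hIeven _ h1; omega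
    simp [swapPerm, h1, h2]
  · by_cases h2 : j ∈ I
    · have h3 : j - 1 + 1 = j := Nat.sub_add_cancel (hpos _ h2)
      simp [swapPerm, h1, h2, h3]
    · simp [swapPerm, h1, h2]

/-- The permutation preserves an initial segment whose boundary is not swapped. -/
lemma swapPerm_lt {I : Finset ℕ} {N : ℕ} (hN : N ∉ I) {j : ℕ} (hj : j < N) :
    swapPerm I j < N := by
  unfold swapPerm
  split_ifs with h1 h2
  · have : j + 1 ≠ N := fun h => hN (h ▸ h1)
    omega
  · omega
  · exact hj

/-! ### Splitting the length-`2m` model -/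

lemma evenPos_lt {m : ℕ} (t : Fin m) : 2 * t.val < 2 * m := by have := t.isLt; omega

lemma oddPos_lt {m : ℕ} (t : Fin m) : 2 * t.val + 1 < 2 * m := by have := t.isLt; omega

/-- Even and odd positions of `Fin (2 * m)`, as `(t, k) ↦ 2t + k`. -/
def pairEquiv (m : ℕ) : Fin m × Fin 2 ≃ Fin (2 * m) :=
  finProdFinEquiv.trans (finCongr (Nat.mul_comm m 2))

lemma pairEquiv_zero {m : ℕ} (t : Fin m) :
    pairEquiv m (t, 0) = ⟨2 * t.val, evenPos_lt t⟩ := by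
  ext; simp [pairEquiv]

lemma pairEquiv_one {m : ℕ} (t : Fin m) :
    pairEquiv m (t, 1) = ⟨2 * t.val + 1, oddPos_lt t⟩ := by
  ext; simp [pairEquiv, Nat.add_comm]

lemma sum_pairs {m : ℕ} {R : Type*} [AddCommMonoid R] (f : Fin (2 * m) → R) :
    ∑ r, f r = ∑ t : Fin m, (f ⟨2 * t.val, evenPos_lt t⟩ +
      f ⟨2 * t.val + 1, oddPos_lt t⟩) := by
  rw [← (pairEquiv m).sum_comp, Fintype.sum_prod_type]
  simp only [Fin.sum_univ_two, pairEquiv_zero, pairEquiv_one]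

lemma prod_pairs {m : ℕ} {R : Type*} [CommMonoid R] (f : Fin (2 * m) → R) :
    ∏ r, f r = ∏ t : Fin m, (f ⟨2 * t.val, evenPos_lt t⟩ *
      f ⟨2 * t.val + 1, oddPos_lt t⟩) := by
  rw [← (pairEquiv m).prod_comp, Fintype.prod_prod_type]
  simp only [Fin.prod_univ_two, pairEquiv_zero, pairEquiv_one]

lemma vecMul_interKron_even_s11 {m : ℕ} (A : Matrix (Fin m) (Fin m) (ZMod 2))
    (w : Fin (2 * m) → ZMod 2) (c : Fin m) :
    Matrix.vecMul w (interKron A) ⟨2 * c.val, evenPos_lt c⟩ =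
      Matrix.vecMul (fun t : Fin m => w ⟨2 * t.val, evenPos_lt t⟩ +
        w ⟨2 * t.val + 1, oddPos_lt t⟩) A c := by
  simp only [Matrix.vecMul, dotProduct]
  rw [sum_pairs]
  refine Finset.sum_congr rfl fun t _ => ?_
  have h1 : (2 * t.val + 1) / 2 = t.val := by omega
  simp [interKron, G2, h1, Nat.add_mod, add_mul]

lemma vecMul_interKron_odd_s11 {m : ℕ} (A : Matrix (Fin m) (Fin m) (ZMod 2))
    (w : Fin (2 * m) → ZMod 2) (c : Fin m) :
    Matrix.vecMul w (interKron A) ⟨2 * c.val + 1, oddPos_lt c⟩ =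
      Matrix.vecMul (fun t : Fin m => w ⟨2 * t.val + 1, oddPos_lt t⟩) A c := by
  simp only [Matrix.vecMul, dotProduct]
  rw [sum_pairs]
  refine Finset.sum_congr rfl fun t _ => ?_
  have h1 : (2 * t.val + 1) / 2 = t.val := by omega
  have h2 : (2 * c.val + 1) / 2 = c.val := by omega
  simp [interKron, G2, h1, h2, Nat.add_mod]

/-- The permutation `P_𝓘` as a permutation of `Fin (2 * m)`. -/
def swapEquiv (I : Finset ℕ) (m : ℕ) (hpos : ∀ x ∈ I, 1 ≤ x) (hIeven : ∀ x ∈ I, 2 ∣ x)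
    (hN : 2 * m ∉ I) : Equiv.Perm (Fin (2 * m)) where
  toFun r := ⟨swapPerm I r.val, swapPerm_lt hN r.isLt⟩
  invFun r := ⟨swapPerm I r.val, swapPerm_lt hN r.isLt⟩
  left_inv r := Fin.ext (swapPerm_swapPerm hpos hIeven r.val)
  right_inv r := Fin.ext (swapPerm_swapPerm hpos hIeven r.val)

lemma vecMul_permMatrix {I : Finset ℕ} {m : ℕ} (hpos : ∀ x ∈ I, 1 ≤ x)
    (hIeven : ∀ x ∈ I, 2 ∣ x) (hN : 2 * m ∉ I) (v : Fin (2 * m) → ZMod 2) :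
    Matrix.vecMul v (permMatrix I (2 * m)) = v ∘ swapEquiv I m hpos hIeven hN := by
  funext c
  simp only [Matrix.vecMul, dotProduct, permMatrix, mul_ite, mul_one, mul_zero,
    Function.comp_apply]
  rw [Finset.sum_eq_single (swapEquiv I m hpos hIeven hN c)]
  · exact if_pos (swapPerm_swapPerm hpos hIeven c.val)
  · intro r _ hr
    refine if_neg fun h => hr (Fin.ext ?_)
    change r.val = swapPerm I c.val
    rw [← h, swapPerm_swapPerm hpos hIeven]
  · simp

/-- The bijection `w ↦ ((w_{2t} + w_{2t+1})_t, (w_{2t+1})_t)`, which multiplies each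
pair of coordinates by `G₂` and separates the results by parity. -/
def butterfly (m : ℕ) :
    (Fin (2 * m) → ZMod 2) ≃ (Fin m → ZMod 2) × (Fin m → ZMod 2) where
  toFun w := (fun t => w ⟨2 * t.val, evenPos_lt t⟩ +
      w ⟨2 * t.val + 1, oddPos_lt t⟩,
    fun t => w ⟨2 * t.val + 1, oddPos_lt t⟩)
  invFun p := fun r =>
    if r.val % 2 = 0 then p.1 ⟨r.val / 2, by have := r.isLt; omega⟩ +
      p.2 ⟨r.val / 2, by have := r.isLt; omega⟩
    else p.2 ⟨r.val / 2, by have := r.isLt; omega⟩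
  left_inv w := by
    funext r
    by_cases h : r.val % 2 = 0
    · have h1 : 2 * (r.val / 2) = r.val := by omega
      simp only [h, if_true, h1, add_assoc, CharTwo.add_self_eq_zero, add_zero]
    · have h1 : 2 * (r.val / 2) + 1 = r.val := by omega
      simp only [h, if_false, h1]
  right_inv p := by
    have h1 : ∀ t : ℕ, (2 * t + 1) / 2 = t := by intro t; omega
    have h2 : ∀ t : ℕ, (2 * t + 1) % 2 = 1 := by intro t; omega
    ext t <;> simp [h1, h2, add_assoc, CharTwo.add_self_eq_zero]

/-- Prefix sums of `P_𝓘 (A ⊗ G₂)` at an unswapped even boundary `2K` factor into prefix sums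
of `A`. -/
lemma prefixSum_split {𝒴 : Type*} (W : ZMod 2 → 𝒴 → ℝ) {m : ℕ}
    (A : Matrix (Fin m) (Fin m) (ZMod 2)) (I : Finset ℕ) (hpos : ∀ x ∈ I, 1 ≤ x)
    (hIeven : ∀ x ∈ I, 2 ∣ x) (hN : 2 * m ∉ I) (K : ℕ) (hK : 2 * K ∉ I)
    (y : Fin (2 * m) → 𝒴) (u : ℕ → ZMod 2) :
    prefixSum W (permMatrix I (2 * m) * interKron A) y (2 * K) u =
      prefixSum W A (fun j => y ⟨2 * j.val, evenPos_lt j⟩) K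
          (fun t => u (swapPerm I (2 * t)) + u (swapPerm I (2 * t + 1))) *
        prefixSum W A (fun j => y ⟨2 * j.val + 1, oddPos_lt j⟩) K
          (fun t => u (swapPerm I (2 * t + 1))) := by
  set σ := swapEquiv I m hpos hIeven hN with hσ
  have hσval : ∀ r, (σ r).val = swapPerm I r.val := fun r => rfl
  -- The sum over `v` is reindexed by the butterfly of `v ∘ σ = v P_𝓘`.
  unfold prefixSum
  rw [Finset.sum_mul_sum, ← Fintype.sum_prod_type',
    ← ((σ.arrowCongr (Equiv.refl (ZMod 2))).symm.trans (butterfly m)).sum_comp]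
  refine Finset.sum_congr rfl fun v _ => ?_
  have hL : likelihood W (permMatrix I (2 * m) * interKron A) y v =
      likelihood W A (fun j => y ⟨2 * j.val, evenPos_lt j⟩) (butterfly m (v ∘ σ)).1 *
      likelihood W A (fun j => y ⟨2 * j.val + 1, oddPos_lt j⟩)
        (butterfly m (v ∘ σ)).2 := by
    unfold likelihood
    rw [← Matrix.vecMul_vecMul, vecMul_permMatrix hpos hIeven hN, prod_pairs,
      Finset.prod_mul_distrib]
    simp only [vecMul_interKron_even_s11, vecMul_interKron_odd_s11]
    rfl
  have hiff : (∀ j : Fin (2 * m), j.val < 2 * K → v j = u j.val) ↔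
      (∀ t : Fin m, t.val < K → (butterfly m (v ∘ σ)).1 t =
        u (swapPerm I (2 * t.val)) + u (swapPerm I (2 * t.val + 1))) ∧
      (∀ t : Fin m, t.val < K → (butterfly m (v ∘ σ)).2 t =
        u (swapPerm I (2 * t.val + 1))) := by
    simp only [butterfly, Equiv.coe_fn_mk, Function.comp_apply]
    constructor
    · intro h
      have h' : ∀ r : Fin (2 * m), r.val < 2 * K → v (σ r) = u (swapPerm I r.val) :=
        fun r hr => h (σ r) (swapPerm_lt hK hr)
      refine ⟨fun t ht => ?_, fun t ht => ?_⟩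
      · rw [h' _ (by simp; omega), h' _ (by simp; omega)]
      · rw [h' _ (by simp; omega)]
    · rintro ⟨h1, h2⟩
      have h' : ∀ r : Fin (2 * m), r.val < 2 * K → v (σ r) = u (swapPerm I r.val) := by
        intro r hr
        have ho := h2 ⟨r.val / 2, by omega⟩ (by simp; omega)
        have he := h1 ⟨r.val / 2, by omega⟩ (by simp; omega)
        rw [ho, add_left_inj] at he
        rcases Nat.mod_two_eq_zero_or_one r.val with h | h
        · have h3 : 2 * (r.val / 2) = r.val := by omega
          simpa only [h3] using he
        · have h3 : 2 * (r.val / 2) + 1 = r.val := by omega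
          simpa only [h3] using ho
      intro j hj
      have h3 := h' (σ j) (swapPerm_lt hK hj)
      have h4 : σ (σ j) = j := Fin.ext (swapPerm_swapPerm hpos hIeven j.val)
      rwa [h4, hσval, swapPerm_swapPerm hpos hIeven] at h3
  rw [if_congr hiff hL rfl]
  exact (ite_zero_mul_ite_zero ..).symm

/-- Lemma 2, Case i (swapped adjacent bits, `2i ∈ 𝓘`): the SDB identities
`V_{2i−1}^{Gₙ} = (V_i^A)^▼`, `V_{2i}^{Gₙ} = (V_i^A)^◆`, `V_{2i+1}^{Gₙ} = (V_i^A)^▲`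
(paper's 1-based index `i`, `n = 2m ≥ 4`; the channels below use 0-based indices,
and `û = u ∘ swapPerm 𝓘`). -/
theorem abs_adjChannel_swapped {𝒴 : Type*} [Fintype 𝒴]
    (W : ZMod 2 → 𝒴 → ℝ) (hW0 : ∀ x y, 0 ≤ W x y) (hW1 : ∀ x, ∑ y, W x y = 1)
    (m : ℕ) (hm : 2 ≤ m) (A : Matrix (Fin m) (Fin m) (ZMod 2))
    (I : Finset ℕ)
    (hIrange : ∀ x ∈ I, 1 ≤ x ∧ x ≤ 2 * m - 1)
    (hIeven : ∀ x ∈ I, 2 ∣ x)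
    (hIsep : ∀ x ∈ I, ∀ z ∈ I, x ≠ z → x + 4 ≤ z ∨ z + 4 ≤ x)
    (i : ℕ) (hi1 : 1 ≤ i) (hi2 : i ≤ m - 1) (hmem : 2 * i ∈ I)
    (y : Fin (2 * m) → 𝒴) (u : ℕ → ZMod 2) :
    (adjChannel W (permMatrix I (2 * m) * interKron A) (2 * i - 2) y u
        (u (2 * i - 2)) (u (2 * i - 1)) =
      (1 / 4 : ℝ) * ∑ c : ZMod 2, ∑ d : ZMod 2,
        adjChannel W A (i - 1) (fun j => y ⟨2 * j.val, by have := j.isLt; omega⟩)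
            (fun t => u (swapPerm I (2 * t)) + u (swapPerm I (2 * t + 1)))
            (u (2 * i - 2) + c) (u (2 * i - 1) + d) *
          adjChannel W A (i - 1) (fun j => y ⟨2 * j.val + 1, by have := j.isLt; omega⟩)
            (fun t => u (swapPerm I (2 * t + 1))) c d) ∧
    (adjChannel W (permMatrix I (2 * m) * interKron A) (2 * i - 1) y u
        (u (2 * i - 1)) (u (2 * i)) =
      (1 / 4 : ℝ) * ∑ d : ZMod 2,
        adjChannel W A (i - 1) (fun j => y ⟨2 * j.val, by have := j.isLt; omega⟩)
            (fun t => u (swapPerm I (2 * t)) + u (swapPerm I (2 * t + 1)))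
            (u (2 * i - 2) + u (2 * i)) (u (2 * i - 1) + d) *
          adjChannel W A (i - 1) (fun j => y ⟨2 * j.val + 1, by have := j.isLt; omega⟩)
            (fun t => u (swapPerm I (2 * t + 1))) (u (2 * i)) d) ∧
    (adjChannel W (permMatrix I (2 * m) * interKron A) (2 * i) y u
        (u (2 * i)) (u (2 * i + 1)) =
      (1 / 4 : ℝ) *
        adjChannel W A (i - 1) (fun j => y ⟨2 * j.val, by have := j.isLt; omega⟩)
            (fun t => u (swapPerm I (2 * t)) + u (swapPerm I (2 * t + 1)))
            (u (2 * i - 2) + u (2 * i)) (u (2 * i - 1) + u (2 * i + 1)) *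
          adjChannel W A (i - 1) (fun j => y ⟨2 * j.val + 1, by have := j.isLt; omega⟩)
            (fun t => u (swapPerm I (2 * t + 1))) (u (2 * i)) (u (2 * i + 1))) := by
  have hpos : ∀ x ∈ I, 1 ≤ x := fun x hx => (hIrange x hx).1
  have hN : 2 * m ∉ I := fun h => by have := (hIrange _ h).2; omega
  have hK : 2 * (i + 1) ∉ I := fun h => by
    rcases hIsep _ hmem _ h (by omega) with h | h <;> omega
  have hB : 2 * (i - 1) ∉ I := fun h => by
    rcases hIsep _ hmem _ h (by omega) with h | h <;> omega
  have hodd : ∀ t, 2 * t + 1 ∉ I := fun t h => by have := hIeven _ h; omega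
  have e1 : swapPerm I (2 * (i - 1)) = 2 * i - 2 := by
    simp only [swapPerm, hodd, hB, if_false]; omega
  have e2 : swapPerm I (2 * (i - 1) + 1) = 2 * i := by
    have h : 2 * (i - 1) + 1 + 1 = 2 * i := by omega
    simp only [swapPerm, h, hmem, if_true]
  have e3 : swapPerm I (2 * i) = 2 * i - 1 := by
    simp only [swapPerm, hodd, hmem, if_false, if_true]
  have e4 : swapPerm I (2 * i + 1) = 2 * i + 1 := by
    have h : 2 * i + 1 + 1 ∉ I := hK
    simp only [swapPerm, h, hodd, if_false]
  have hlt : ∀ t < 2 * (i - 1), swapPerm I t < 2 * i - 2 := fun t ht => by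
    have := swapPerm_lt hB ht; omega
  -- Identity (c) for every message `w` with the same first `2i - 2` bits as `u`.
  have key : ∀ w : ℕ → ZMod 2, (∀ t < 2 * i - 2, w t = u t) →
      4 * (1 / 2 : ℝ) ^ (2 * m) *
        prefixSum W (permMatrix I (2 * m) * interKron A) y (2 * i + 2) w =
      (1 / 4 : ℝ) *
        (adjChannel W A (i - 1) (fun j => y ⟨2 * j.val, evenPos_lt j⟩)
            (fun t => u (swapPerm I (2 * t)) + u (swapPerm I (2 * t + 1)))
            (w (2 * i - 2) + w (2 * i)) (w (2 * i - 1) + w (2 * i + 1)) *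
          adjChannel W A (i - 1) (fun j => y ⟨2 * j.val + 1, oddPos_lt j⟩)
            (fun t => u (swapPerm I (2 * t + 1))) (w (2 * i)) (w (2 * i + 1))) := by
    intro w hw
    have hi : i - 1 + 1 = i := by omega
    rw [adjChannel_eq_prefixSum W hW1 A (i - 1) (by omega) _ _
        (fun t => w (swapPerm I (2 * t)) + w (swapPerm I (2 * t + 1))) _ _
        (fun t ht => by
          simp only [hw _ (hlt (2 * t) (by omega)), hw _ (hlt (2 * t + 1) (by omega))])
        (by simp only [e1, e2]) (by simp only [hi, e3, e4]),
      adjChannel_eq_prefixSum W hW1 A (i - 1) (by omega) _ _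
        (fun t => w (swapPerm I (2 * t + 1))) _ _
        (fun t ht => by simp only [hw _ (hlt (2 * t + 1) (by omega))])
        (by simp only [e2]) (by simp only [hi, e4]),
      show 2 * i + 2 = 2 * (i + 1) by ring, show i - 1 + 2 = i + 1 by omega,
      prefixSum_split W A I hpos hIeven hN (i + 1) hK]
    ring
  have n1 : 2 * i - 2 ≠ 2 * i := by omega
  have n2 : 2 * i - 2 ≠ 2 * i + 1 := by omega
  have n3 : 2 * i - 1 ≠ 2 * i := by omega
  have n4 : 2 * i - 1 ≠ 2 * i + 1 := by omega
  have n5 : 2 * i ≠ 2 * i + 1 := by omega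
  refine ⟨?_, ?_, ?_⟩
  · rw [adjChannel_eq_prefixSum W hW1 _ (2 * i - 2) (by omega) y u u _ _ (fun _ _ => rfl) rfl
      (by congr 1; omega), show 2 * i - 2 + 2 = 2 * i by omega,
      prefixSum_succ _ _ _ _ (by omega), Finset.mul_sum, Finset.mul_sum]
    refine Finset.sum_congr rfl fun c _ => ?_
    rw [prefixSum_succ _ _ _ _ (by omega), Finset.mul_sum, Finset.mul_sum]
    refine Finset.sum_congr rfl fun d _ => ?_
    rw [key _ fun t ht => by
      rw [Function.update_of_ne (by omega), Function.update_of_ne (by omega)]]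
    simp [n1, n2, n3, n4]
  · rw [adjChannel_eq_prefixSum W hW1 _ (2 * i - 1) (by omega) y u u _ _ (fun _ _ => rfl) rfl
      (by congr 1; omega), show 2 * i - 1 + 2 = 2 * i + 1 by omega,
      prefixSum_succ _ _ _ _ (by omega), Finset.mul_sum, Finset.mul_sum]
    refine Finset.sum_congr rfl fun d _ => ?_
    rw [key _ fun t ht => by rw [Function.update_of_ne (by omega)]]
    simp [n2, n4]
  · rw [adjChannel_eq_prefixSum W hW1 _ (2 * i) (by omega) y u u _ _ (fun _ _ => rfl) rfl rfl,
      key u fun _ _ => rfl, mul_assoc]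
end
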